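/- Let k_δ ∈ L²([0,1]²), δ ∈ [0, δ̄), be stochastic kernels of the form k_δ = k₀ + δ·k̇ + r_δ with k̇, r_δ ∈ L²([0,1]²) and ‖r_δ‖_{L²([0,1]²)}/δ → 0 as δ → 0⁺, and let L_δ be the associated integral operators on L². Suppose L₀ satisfies the mixing condition (A1), and let f₀ be the unique fixed point of L₀ with ∫ f₀ dm = 1. Then: (i) k̇ ∈ V_ker, i.e. ∫₀¹ k̇(x,y) dx = 0 for a.e. y; (ii) there exists δ₂ > 0 such that for every δ ∈ [0, δ₂) the operator L_δ has a unique fixed point f_δ with ∫ f_δ dm = 1, and ‖(f_δ − f₀)/δ − h‖₂ → 0 as δ → 0⁺, where h is the unique element of V satisfying h − L₀ h = g with g(x) := ∫₀¹ k̇(x,y) f₀(y) dy. -/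

import Mathlib

/-!
Let `φ` denote integration. The normalised fixed points of `L_δ` are exactly the solutions of
`(1 - L_δ + v ⊗ φ) f = v`, where `v` is any function of integral one. At `δ = 0` this deflated
operator is injective by mixing, hence invertible by the Fredholm alternative, since
Hilbert-Schmidt operators are compact. Invertibility is an open condition and inversion is
differentiable, so `f_δ` exists and is unique for small `δ`, and its derivative at `0` is
`(1 - L₀ + v ⊗ φ)⁻¹ (∫ k̇(·, y) f₀(y) dy) = h`. The kernel `k̇` lies in `V_ker` because it is the
derivative of a path along which every integral `∫_{[0,1] × B} k_δ = m(B)` is constant.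
-/

open MeasureTheory

/-- Lebesgue measure restricted to the unit interval `[0,1]`. -/
noncomputable def μ01 : Measure ℝ := volume.restrict (Set.Icc (0 : ℝ) 1)

/-- Two-dimensional Lebesgue measure restricted to the unit square `[0,1]²`. -/
noncomputable def ν01 : Measure (ℝ × ℝ) := μ01.prod μ01

open Filter Topology ContinuousLinearMap
open scoped ENNReal

section KernelIntegral

variable {α β 𝕜 : Type*} [MeasurableSpace β] [RCLike 𝕜]

/-- The function `x ↦ ∫ k(x, y) f(y) dν(y)`, that is, the integral operator with kernel `k` applied
to `f`, at the level of functions rather than classes; it takes the junk value `0` at the points `x`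
where the integrand is not integrable. -/
noncomputable def kernelIntegral (ν : Measure β) (k : α × β → 𝕜) (f : β → 𝕜) (x : α) : 𝕜 :=
  ∫ y, k (x, y) * f y ∂ν

variable {k l : α × β → 𝕜} {f g : β → 𝕜}

lemma kernelIntegral_smul_left {ν : Measure β} (c : 𝕜) :
    kernelIntegral ν (c • k) f = c • kernelIntegral ν k f := by
  ext x
  simp only [kernelIntegral, Pi.smul_apply, smul_eq_mul, mul_assoc, integral_const_mul]

lemma kernelIntegral_smul_right {ν : Measure β} (c : 𝕜) :
    kernelIntegral ν k (c • f) = c • kernelIntegral ν k f := by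
  ext x
  simp only [kernelIntegral, Pi.smul_apply, smul_eq_mul, mul_left_comm _ c, integral_const_mul]

variable [MeasurableSpace α] {μ : Measure α} {ν : Measure β}

lemma eLpNorm_eLpNorm_prodMk {E : Type*} [NormedAddCommGroup E] [SFinite ν] {p : ℝ≥0∞}
    (hp₀ : p ≠ 0) (hp : p ≠ ∞) {f : α × β → E} (hf : AEStronglyMeasurable f (μ.prod ν)) :
    eLpNorm (fun x ↦ eLpNorm (fun y ↦ f (x, y)) p ν) p μ = eLpNorm f p (μ.prod ν) := by
  have hp' : p.toReal ≠ 0 := (ENNReal.toReal_pos hp₀ hp).ne'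
  simp only [eLpNorm_eq_lintegral_rpow_enorm_toReal hp₀ hp, enorm_eq_self, ← ENNReal.rpow_mul,
    one_div_mul_cancel hp', ENNReal.rpow_one,
    lintegral_prod _ (hf.enorm.pow_const p.toReal)]

lemma aemeasurable_eLpNorm_prodMk {E : Type*} [NormedAddCommGroup E] [SFinite ν] {p : ℝ≥0∞}
    (hp₀ : p ≠ 0) (hp : p ≠ ∞) {f : α × β → E} (hf : AEStronglyMeasurable f (μ.prod ν)) :
    AEMeasurable (fun x ↦ eLpNorm (fun y ↦ f (x, y)) p ν) μ := by
  simp only [eLpNorm_eq_lintegral_rpow_enorm_toReal hp₀ hp]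
  exact (hf.enorm.pow_const p.toReal).lintegral_prod_right'.pow_const _

lemma ae_memLp_prodMk {E : Type*} [NormedAddCommGroup E] [SFinite ν] {p : ℝ≥0∞}
    (hp₀ : p ≠ 0) (hp : p ≠ ∞) {f : α × β → E} (hf : MemLp f p (μ.prod ν)) :
    ∀ᵐ x ∂μ, MemLp (fun y ↦ f (x, y)) p ν := by
  have hint := hf.integrable_norm_rpow hp₀ hp
  filter_upwards [((integrable_prod_iff hint.1).1 hint).1, hf.1.prodMk_left] with x hx hmeas
  exact (integrable_norm_rpow_iff hmeas hp₀ hp).1 hx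

lemma kernelIntegral_congr_ae [SFinite ν] (hk : k =ᵐ[μ.prod ν] l) (hf : f =ᵐ[ν] g) :
    kernelIntegral ν k f =ᵐ[μ] kernelIntegral ν l g := by
  filter_upwards [Measure.ae_ae_of_ae_prod hk] with x hx
  have hx : (fun y ↦ k (x, y)) =ᵐ[ν] fun y ↦ l (x, y) := hx
  exact integral_congr_ae (hx.mul hf)

lemma ae_integrable_kernel_mul [SFinite ν] (hk : MemLp k 2 (μ.prod ν)) (hf : MemLp f 2 ν) :
    ∀ᵐ x ∂μ, Integrable (fun y ↦ k (x, y) * f y) ν := by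
  filter_upwards [ae_memLp_prodMk two_ne_zero ENNReal.ofNat_ne_top hk] with x hx
  exact hx.integrable_mul hf

lemma kernelIntegral_add_left [SFinite ν] (hk : MemLp k 2 (μ.prod ν)) (hl : MemLp l 2 (μ.prod ν))
    (hf : MemLp f 2 ν) :
    kernelIntegral ν (k + l) f =ᵐ[μ] kernelIntegral ν k f + kernelIntegral ν l f := by
  filter_upwards [ae_integrable_kernel_mul hk hf, ae_integrable_kernel_mul hl hf] with x hkx hlx
  simp only [kernelIntegral, Pi.add_apply, add_mul, integral_add hkx hlx]

lemma kernelIntegral_add_right [SFinite ν] (hk : MemLp k 2 (μ.prod ν)) (hf : MemLp f 2 ν)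
    (hg : MemLp g 2 ν) :
    kernelIntegral ν k (f + g) =ᵐ[μ] kernelIntegral ν k f + kernelIntegral ν k g := by
  filter_upwards [ae_integrable_kernel_mul hk hf, ae_integrable_kernel_mul hk hg] with x hfx hgx
  simp only [kernelIntegral, Pi.add_apply, mul_add, integral_add hfx hgx]

lemma enorm_integral_mul_le {p q : ℝ≥0∞} [p.HolderConjugate q] (hf : AEStronglyMeasurable f ν)
    (hg : AEStronglyMeasurable g ν) :
    ‖∫ y, f y * g y ∂ν‖ₑ ≤ eLpNorm f p ν * eLpNorm g q ν :=
  calc ‖∫ y, f y * g y ∂ν‖ₑ ≤ ∫⁻ y, ‖f y * g y‖ₑ ∂ν := enorm_integral_le_lintegral_enorm _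
    _ = eLpNorm (f • g) 1 ν := by rw [eLpNorm_one_eq_lintegral_enorm]; rfl
    _ ≤ eLpNorm f p ν * eLpNorm g q ν := eLpNorm_smul_le_mul_eLpNorm hg hf

lemma eLpNorm_kernelIntegral_le [SFinite ν] (hk : AEStronglyMeasurable k (μ.prod ν))
    (hf : AEStronglyMeasurable f ν) :
    eLpNorm (kernelIntegral ν k f) 2 μ ≤ eLpNorm k 2 (μ.prod ν) * eLpNorm f 2 ν := by
  rw [← eLpNorm_eLpNorm_prodMk two_ne_zero ENNReal.ofNat_ne_top hk, mul_comm]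
  refine eLpNorm_le_mul_eLpNorm_of_ae_le_mul'' 2
    (aemeasurable_eLpNorm_prodMk two_ne_zero ENNReal.ofNat_ne_top hk).aestronglyMeasurable ?_
  filter_upwards [hk.prodMk_left] with x hx
  rw [enorm_eq_self, mul_comm]
  exact enorm_integral_mul_le hx hf

lemma memLp_kernelIntegral [SFinite ν] (hk : MemLp k 2 (μ.prod ν)) (hf : MemLp f 2 ν) :
    MemLp (kernelIntegral ν k f) 2 μ :=
  ⟨(hk.1.mul hf.1.comp_snd).integral_prod_right',
    (eLpNorm_kernelIntegral_le hk.1 hf.1).trans_lt (ENNReal.mul_lt_top hk.2 hf.2)⟩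

lemma integral_kernelIntegral [IsFiniteMeasure μ] [SFinite ν] (hk : MemLp k 2 (μ.prod ν))
    (hf : MemLp f 2 ν) :
    ∫ x, kernelIntegral ν k f x ∂μ = ∫ y, (∫ x, k (x, y) ∂μ) * f y ∂ν := by
  have hkf : Integrable (fun p : α × β ↦ k p * f p.2) (μ.prod ν) :=
    hk.integrable_mul (hf.comp_snd μ)
  simp only [kernelIntegral, integral_integral_swap (f := fun x y ↦ k (x, y) * f y) hkf,
    integral_mul_const]

/-- The integral operator `L² → L²` with kernel `k ∈ L²(μ ⊗ ν)`, as a continuous linear map of the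
kernel, so that differentiable families of kernels give differentiable families of operators. -/
noncomputable def hilbertSchmidtOperator [SFinite ν] :
    Lp 𝕜 2 (μ.prod ν) →L[𝕜] Lp 𝕜 2 ν →L[𝕜] Lp 𝕜 2 μ :=
  LinearMap.mkContinuous₂
    (LinearMap.mk₂ 𝕜 (fun k f ↦ (memLp_kernelIntegral (Lp.memLp k) (Lp.memLp f)).toLp _)
      (fun k l f ↦ by
        rw [← MemLp.toLp_add, MemLp.toLp_eq_toLp_iff]
        exact (kernelIntegral_congr_ae (Lp.coeFn_add k l) .rfl).trans
          (kernelIntegral_add_left (Lp.memLp k) (Lp.memLp l) (Lp.memLp f)))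
      (fun c k f ↦ by
        rw [← MemLp.toLp_const_smul, MemLp.toLp_eq_toLp_iff, ← kernelIntegral_smul_left]
        exact kernelIntegral_congr_ae (Lp.coeFn_smul c k) .rfl)
      (fun k f g ↦ by
        rw [← MemLp.toLp_add, MemLp.toLp_eq_toLp_iff]
        exact (kernelIntegral_congr_ae .rfl (Lp.coeFn_add f g)).trans
          (kernelIntegral_add_right (Lp.memLp k) (Lp.memLp f) (Lp.memLp g)))
      (fun c k f ↦ by
        rw [← MemLp.toLp_const_smul, MemLp.toLp_eq_toLp_iff, ← kernelIntegral_smul_right]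
        exact kernelIntegral_congr_ae .rfl (Lp.coeFn_smul c f)))
    1 (fun k f ↦ by
      rw [LinearMap.mk₂_apply, Lp.norm_toLp, one_mul, Lp.norm_def, Lp.norm_def,
        ← ENNReal.toReal_mul]
      exact ENNReal.toReal_mono (ENNReal.mul_lt_top (Lp.memLp k).2 (Lp.memLp f).2).ne
        (eLpNorm_kernelIntegral_le (Lp.memLp k).1 (Lp.memLp f).1))

lemma coeFn_hilbertSchmidtOperator [SFinite ν] (k : Lp 𝕜 2 (μ.prod ν)) (f : Lp 𝕜 2 ν) :
    hilbertSchmidtOperator k f =ᵐ[μ] kernelIntegral ν k f := by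
  rw [hilbertSchmidtOperator, LinearMap.mkContinuous₂_apply, LinearMap.mk₂_apply]
  exact MemLp.coeFn_toLp _

lemma eq_hilbertSchmidtOperator [SFinite ν] {k : Lp 𝕜 2 (μ.prod ν)} {L : Lp 𝕜 2 ν →L[𝕜] Lp 𝕜 2 μ}
    (hL : ∀ f : Lp 𝕜 2 ν, L f =ᵐ[μ] kernelIntegral ν k f) : L = hilbertSchmidtOperator k :=
  ContinuousLinearMap.ext fun f ↦
    Lp.ext ((hL f).trans (coeFn_hilbertSchmidtOperator k f).symm)

lemma ae_eq_zero_of_forall_setIntegral_prod_eq_zero {E : Type*} [NormedAddCommGroup E]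
    [NormedSpace ℝ E] [CompleteSpace E] {ρ : Measure (α × β)} {f : α × β → E} (hf : Integrable f ρ)
    (hrect : ∀ (s : Set α) (t : Set β), MeasurableSet s → MeasurableSet t →
      ∫ p in s ×ˢ t, f p ∂ρ = 0) :
    f =ᵐ[ρ] 0 := by
  have huniv : ∫ p, f p ∂ρ = 0 := by
    simpa only [Set.univ_prod_univ, setIntegral_univ] using hrect .univ .univ .univ .univ
  suffices h : ∀ u, MeasurableSet u → ∫ p in u, f p ∂ρ = 0 from
    hf.ae_eq_zero_of_forall_setIntegral_eq_zero fun u hu _ ↦ h u hu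
  intro u hu
  induction u, hu using MeasurableSpace.induction_on_inter
    generateFrom_prod.symm isPiSystem_prod with
  | empty => exact setIntegral_empty
  | basic u hu =>
    obtain ⟨s, hs, t, ht, rfl⟩ := hu
    exact hrect s t hs ht
  | compl u hu ih => rw [setIntegral_compl hu hf, huniv, ih, sub_zero]
  | iUnion u hdisj hu ih =>
    simp only [integral_iUnion hu hdisj hf.integrableOn, ih, tsum_zero]

lemma topologicalClosure_span_indicatorConstLp_prod (ρ : Measure (α × β)) [IsFiniteMeasure ρ] :
    (Submodule.span 𝕜 {k : Lp 𝕜 2 ρ | ∃ (s : Set α) (t : Set β) (hs : MeasurableSet s)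
      (ht : MeasurableSet t), k = indicatorConstLp 2 (hs.prod ht) (measure_ne_top ρ _) 1}
      ).topologicalClosure = ⊤ := by
  rw [Submodule.topologicalClosure_eq_top_iff, Submodule.eq_bot_iff]
  intro k hk
  rw [Lp.eq_zero_iff_ae_eq_zero]
  refine ae_eq_zero_of_forall_setIntegral_prod_eq_zero
    ((Lp.memLp k).integrable one_le_two) fun s t hs ht ↦ ?_
  rw [← L2.inner_indicatorConstLp_one (𝕜 := 𝕜) (hs.prod ht) (measure_ne_top ρ _) k]
  exact (Submodule.mem_orthogonal _ k).1 hk _ (Submodule.subset_span ⟨s, t, hs, ht, rfl⟩)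

variable [IsFiniteMeasure μ] [IsFiniteMeasure ν]

lemma hilbertSchmidtOperator_indicatorConstLp_prod {s : Set α} {t : Set β} (hs : MeasurableSet s)
    (ht : MeasurableSet t) :
    hilbertSchmidtOperator (indicatorConstLp 2 (hs.prod ht) (measure_ne_top (μ.prod ν) _) (1 : 𝕜)) =
      InnerProductSpace.rankOne 𝕜 (indicatorConstLp 2 hs (measure_ne_top μ _) (1 : 𝕜))
        (indicatorConstLp 2 ht (measure_ne_top ν _) (1 : 𝕜)) := by
  ext1 f
  rw [InnerProductSpace.rankOne_apply, L2.inner_indicatorConstLp_one]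
  refine Lp.ext ?_
  filter_upwards [coeFn_hilbertSchmidtOperator _ f,
    kernelIntegral_congr_ae (μ := μ) indicatorConstLp_coeFn (.refl (ae ν) f),
    Lp.coeFn_smul (∫ y in t, f y ∂ν) (indicatorConstLp 2 hs (measure_ne_top μ _) (1 : 𝕜)),
    indicatorConstLp_coeFn (p := 2) (hs := hs) (hμs := measure_ne_top μ s) (c := (1 : 𝕜))]
    with x hx₁ hx₂ hx₃ hx₄
  rw [hx₁, hx₂, hx₃, Pi.smul_apply, hx₄, smul_eq_mul, mul_comm, ← integral_indicator ht,
    ← integral_const_mul]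
  refine integral_congr_ae (.of_forall fun y ↦ ?_)
  by_cases hx : x ∈ s <;> by_cases hy : y ∈ t <;> simp [hx, hy]

lemma isCompactOperator_rankOne {E F : Type*} [NormedAddCommGroup E] [InnerProductSpace 𝕜 E]
    [NormedAddCommGroup F] [InnerProductSpace 𝕜 F] (v : E) (w : F) :
    IsCompactOperator (InnerProductSpace.rankOne 𝕜 v w) :=
  (isCompactOperator_of_locallyCompactSpace_dom (innerSL 𝕜 w)).clm_comp
    (ContinuousLinearMap.toSpanSingleton 𝕜 v)

lemma isCompactOperator_hilbertSchmidtOperator (k : Lp 𝕜 2 (μ.prod ν)) :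
    IsCompactOperator (hilbertSchmidtOperator k) := by
  let C : Submodule 𝕜 (Lp 𝕜 2 (μ.prod ν)) :=
    (compactOperator (RingHom.id 𝕜) (Lp 𝕜 2 ν) (Lp 𝕜 2 μ)).comap
      hilbertSchmidtOperator.toLinearMap
  have hC_closed : IsClosed (C : Set (Lp 𝕜 2 (μ.prod ν))) :=
    IsClosed.preimage (hilbertSchmidtOperator (𝕜 := 𝕜) (μ := μ) (ν := ν)).continuous
      isClosed_setOfPred_isCompactOperator
  suffices h : (⊤ : Submodule 𝕜 (Lp 𝕜 2 (μ.prod ν))) ≤ C from h Submodule.mem_top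
  rw [← topologicalClosure_span_indicatorConstLp_prod]
  refine Submodule.topologicalClosure_minimal _ (Submodule.span_le.2 ?_) hC_closed
  rintro _ ⟨s, t, hs, ht, rfl⟩
  change IsCompactOperator (hilbertSchmidtOperator _)
  rw [hilbertSchmidtOperator_indicatorConstLp_prod hs ht]
  exact isCompactOperator_rankOne _ _

end KernelIntegral

section Deflation

variable {𝕜 X : Type*} [NontriviallyNormedField 𝕜] [NormedAddCommGroup X] [NormedSpace 𝕜 X]

/-- The deflation `L - v ⊗ φ` of the operator `L`. When `φ ∘ L = φ` and `φ v = 1`, it removes the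
eigenvalue `1` of `L` that is forced by the invariance of `φ`. -/
def deflation (L : X →L[𝕜] X) (φ : X →L[𝕜] 𝕜) (v : X) : X →L[𝕜] X :=
  L - φ.smulRight v

variable {L : X →L[𝕜] X} {φ : X →L[𝕜] 𝕜} {v : X}

lemma one_sub_deflation_apply (f : X) : (1 - deflation L φ v) f = f - L f + φ f • v := by
  simp [deflation, sub_add]

lemma one_sub_deflation_apply_eq_iff (hL : ∀ f, φ (L f) = φ f) (hv : φ v = 1) {f : X} :
    (1 - deflation L φ v) f = v ↔ L f = f ∧ φ f = 1 := by
  rw [one_sub_deflation_apply]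
  refine ⟨fun h ↦ ?_, fun ⟨hfix, hnorm⟩ ↦ by rw [hfix, hnorm, sub_self, zero_add, one_smul]⟩
  have hnorm : φ f = 1 := by simpa [hL, hv] using congrArg φ h
  rw [hnorm, one_smul, add_eq_right, sub_eq_zero] at h
  exact ⟨h.symm, hnorm⟩

lemma eq_zero_of_tendsto_pow_apply (hfix : L v = v)
    (hlim : Tendsto (fun n : ℕ ↦ (L ^ n) v) atTop (𝓝 0)) : v = 0 := by
  have hpow : ∀ n : ℕ, (L ^ n) v = v := fun n ↦ by
    rw [FunLike.coe_pow_eq_iterate, Function.iterate_fixed hfix]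
  simp only [hpow] at hlim
  exact tendsto_nhds_unique tendsto_const_nhds hlim

lemma isCompactOperator_deflation [LocallyCompactSpace 𝕜] (hL : IsCompactOperator L) :
    IsCompactOperator (deflation L φ v) :=
  hL.sub ((isCompactOperator_of_locallyCompactSpace_dom φ).clm_comp (toSpanSingleton 𝕜 v))

lemma isUnit_one_sub_deflation [LocallyCompactSpace 𝕜] [CompleteSpace X]
    (hcomp : IsCompactOperator L) (hL : ∀ f, φ (L f) = φ f) (hv : φ v = 1)
    (hmix : ∀ g, φ g = 0 → Tendsto (fun n : ℕ ↦ (L ^ n) g) atTop (𝓝 0)) :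
    IsUnit (1 - deflation L φ v) := by
  have hcomp_defl : IsCompactOperator (deflation L φ v) := isCompactOperator_deflation hcomp
  rcases hcomp_defl.hasEigenvalue_or_mem_resolventSet one_ne_zero with heig | hres
  · exfalso
    obtain ⟨w, hw⟩ := heig.exists_hasEigenvector
    have hw_fix : L w - φ w • v = w := by simpa [deflation] using hw.apply_eq_smul
    have hφw : φ w = 0 := by simpa [hL, hv, eq_comm] using congrArg φ hw_fix
    rw [hφw, zero_smul, sub_zero] at hw_fix
    exact hw.2 (eq_zero_of_tendsto_pow_apply hw_fix (hmix w hφw))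
  · simpa [spectrum.mem_resolventSet_iff] using hres

lemma existsUnique_normalized_fixedPoint (hunit : IsUnit (1 - deflation L φ v))
    (hL : ∀ f, φ (L f) = φ f) (hv : φ v = 1) : ∃! f, L f = f ∧ φ f = 1 := by
  have hbij : Function.Bijective ⇑(1 - deflation L φ v) :=
    (Module.End.isUnit_iff _).1 (hunit.map toLinearMapRingHom)
  simpa only [one_sub_deflation_apply_eq_iff hL hv] using hbij.existsUnique v

lemma ringInverse_apply_of_apply_eq {A : X →L[𝕜] X} (hA : IsUnit A) {f g : X} (hfg : A f = g) :
    Ring.inverse A g = f := by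
  rw [← hfg, ← mul_apply_eq_comp, Ring.inverse_mul_cancel A hA, one_apply_eq_self]

lemma eventually_isUnit_one_sub_deflation [CompleteSpace X] {T : Type*} [TopologicalSpace T]
    {L : T → X →L[𝕜] X} {s : Set T} {t₀ : T} (hL : ContinuousWithinAt L s t₀)
    (hunit : IsUnit (1 - deflation (L t₀) φ v)) :
    ∀ᶠ t in 𝓝[s] t₀, IsUnit (1 - deflation (L t) φ v) :=
  (continuousWithinAt_const.sub (hL.sub continuousWithinAt_const)).eventually
    (Units.isOpen.mem_nhds hunit)

variable {L : 𝕜 → X →L[𝕜] X} {L' : X →L[𝕜] X} {s : Set 𝕜} {t₀ : 𝕜} [CompleteSpace X]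

lemma hasDerivWithinAt_inverse_one_sub_deflation (hL : HasDerivWithinAt L L' s t₀)
    (hunit : IsUnit (1 - deflation (L t₀) φ v)) :
    HasDerivWithinAt (fun t ↦ Ring.inverse (1 - deflation (L t) φ v))
      (Ring.inverse (1 - deflation (L t₀) φ v) * L' * Ring.inverse (1 - deflation (L t₀) φ v))
      s t₀ := by
  have hA : HasDerivWithinAt (fun t ↦ 1 - deflation (L t) φ v) (-L') s t₀ :=
    (hL.sub_const _).const_sub 1
  obtain ⟨A, hAu⟩ := hunit
  have hinv := hasFDerivAt_ringInverse (𝕜 := 𝕜) A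
  rw [hAu] at hinv
  simpa [← hAu, mul_assoc] using! hinv.comp_hasDerivWithinAt t₀ hA

lemma hasDerivWithinAt_normalized_fixedPoint {f : 𝕜 → X} {h : X}
    (hL : HasDerivWithinAt L L' s t₀) (hunit : IsUnit (1 - deflation (L t₀) φ v))
    (hinv : ∀ t ∈ s, ∀ g, φ (L t g) = φ g) (hv : φ v = 1) (ht₀ : t₀ ∈ s)
    (hf : ∀ t ∈ s, L t (f t) = f t ∧ φ (f t) = 1)
    (hφh : φ h = 0) (hh : h - L t₀ h = L' (f t₀)) :
    HasDerivWithinAt f h s t₀ := by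
  have hf_eq : ∀ t ∈ s, IsUnit (1 - deflation (L t) φ v) →
      f t = Ring.inverse (1 - deflation (L t) φ v) v := fun t ht hu ↦
    (ringInverse_apply_of_apply_eq hu
      ((one_sub_deflation_apply_eq_iff (hinv t ht) hv).2 (hf t ht))).symm
  have hh_eq : Ring.inverse (1 - deflation (L t₀) φ v) (L' (f t₀)) = h :=
    ringInverse_apply_of_apply_eq hunit (by
      rw [one_sub_deflation_apply, hh, hφh, zero_smul, add_zero])
  have hderiv : HasDerivWithinAt (fun t ↦ Ring.inverse (1 - deflation (L t) φ v) v) h s t₀ := by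
    simpa [← hf_eq t₀ ht₀ hunit, hh_eq] using
      (hasDerivWithinAt_inverse_one_sub_deflation hL hunit).clm_apply
        (hasDerivWithinAt_const t₀ s v)
  refine hderiv.congr_of_eventuallyEq ?_ (hf_eq t₀ ht₀ hunit)
  filter_upwards [eventually_isUnit_one_sub_deflation hL.continuousWithinAt hunit,
    self_mem_nhdsWithin] with t hu ht using hf_eq t ht hu

end Deflation

section LinearResponse

lemma hasDerivWithinAt_Ico_iff_tendsto_norm {E : Type*} [NormedAddCommGroup E] [NormedSpace ℝ E]
    {f : ℝ → E} {f' : E} {a b : ℝ} (hab : a < b) :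
    HasDerivWithinAt f f' (Set.Ico a b) a ↔
      Tendsto (fun t ↦ ‖(t - a)⁻¹ • (f t - f a) - f'‖) (𝓝[>] a) (𝓝 0) := by
  rw [hasDerivWithinAt_iff_tendsto_slope, Set.Ico_sdiff_left, nhdsWithin_Ioo_eq_nhdsGT hab,
    tendsto_iff_norm_sub_tendsto_zero]
  rfl

lemma hasDerivWithinAt_add_smul_add {E : Type*} [NormedAddCommGroup E] [NormedSpace ℝ E]
    {k₀ k' : E} {r : ℝ → E} {b : ℝ} (hb : 0 < b) (hr₀ : r 0 = 0)
    (hr : Tendsto (fun δ ↦ δ⁻¹ * ‖r δ‖) (𝓝[>] 0) (𝓝 0)) :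
    HasDerivWithinAt (fun δ ↦ k₀ + δ • k' + r δ) k' (Set.Ico 0 b) 0 := by
  have hr_deriv : HasDerivWithinAt r 0 (Set.Ico 0 b) 0 := by
    rw [hasDerivWithinAt_Ico_iff_tendsto_norm hb]
    refine hr.congr' ?_
    filter_upwards [self_mem_nhdsWithin] with δ (hδ : 0 < δ)
    rw [hr₀, sub_zero, sub_zero, sub_zero, norm_smul, Real.norm_of_nonneg (inv_nonneg.2 hδ.le)]
  simpa using (((hasDerivWithinAt_id 0 _).smul_const k').const_add k₀).fun_add hr_deriv

theorem linear_response_of_isCompactOperator {X : Type*} [NormedAddCommGroup X] [NormedSpace ℝ X]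
    [CompleteSpace X] {L : ℝ → X →L[ℝ] X} {L' : X →L[ℝ] X} {φ : X →L[ℝ] ℝ} {f₀ : X} {b : ℝ}
    (hb : 0 < b) (hcomp : IsCompactOperator (L 0))
    (hL : HasDerivWithinAt L L' (Set.Ico 0 b) 0)
    (hinv : ∀ δ ∈ Set.Ico 0 b, ∀ f, φ (L δ f) = φ f)
    (hmix : ∀ g, φ g = 0 → Tendsto (fun n : ℕ ↦ (L 0 ^ n) g) atTop (𝓝 0))
    (hfix : L 0 f₀ = f₀) (hnorm : φ f₀ = 1) :
    ∃ δ₂ ∈ Set.Ioc 0 b, (∀ δ ∈ Set.Ico 0 δ₂, ∃! f, L δ f = f ∧ φ f = 1) ∧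
      ∀ h, φ h = 0 → h - L 0 h = L' f₀ →
        ∀ f : ℝ → X, (∀ δ ∈ Set.Ico 0 δ₂, L δ (f δ) = f δ ∧ φ (f δ) = 1) →
          Tendsto (fun δ ↦ ‖δ⁻¹ • (f δ - f₀) - h‖) (𝓝[>] 0) (𝓝 0) := by
  have hunit : IsUnit (1 - deflation (L 0) φ f₀) :=
    isUnit_one_sub_deflation hcomp (hinv 0 ⟨le_rfl, hb⟩) hnorm hmix
  have hunit_near := eventually_isUnit_one_sub_deflation hL.continuousWithinAt hunit
  rw [nhdsWithin_Ico_eq_nhdsGE hb] at hunit_near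
  obtain ⟨δ₂, hδ₂, hunit_Ico⟩ := (mem_nhdsGE_iff_exists_mem_Ioc_Ico_subset hb).1 hunit_near
  have hsub : Set.Ico 0 δ₂ ⊆ Set.Ico 0 b := Set.Ico_subset_Ico_right hδ₂.2
  have h0 : (0 : ℝ) ∈ Set.Ico 0 δ₂ := ⟨le_rfl, hδ₂.1⟩
  have hunique : ∀ δ ∈ Set.Ico 0 δ₂, ∃! f, L δ f = f ∧ φ f = 1 := fun δ hδ ↦
    existsUnique_normalized_fixedPoint (hunit_Ico hδ) (hinv δ (hsub hδ)) hnorm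
  refine ⟨δ₂, hδ₂, hunique, fun h hh hresp f hf ↦ ?_⟩
  have hf0 : f 0 = f₀ := (hunique 0 h0).unique (hf 0 h0) ⟨hfix, hnorm⟩
  have hderiv : HasDerivWithinAt f h (Set.Ico 0 δ₂) 0 :=
    hasDerivWithinAt_normalized_fixedPoint (hL.mono hsub) hunit (fun δ hδ ↦ hinv δ (hsub hδ))
      hnorm h0 hf hh (hf0 ▸ hresp)
  simpa only [sub_zero, hf0] using (hasDerivWithinAt_Ico_iff_tendsto_norm hδ₂.1).1 hderiv

variable {α β 𝕜 : Type*} [MeasurableSpace α] [MeasurableSpace β] [RCLike 𝕜]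
  {μ : Measure α} {ν : Measure β} [IsFiniteMeasure μ]

/-- Integration as a continuous linear functional on `L²(μ)`, realised as the inner product with the
constant function `1`. -/
noncomputable def integralL2 (μ : Measure α) [IsFiniteMeasure μ] : Lp 𝕜 2 μ →L[𝕜] 𝕜 :=
  innerSL 𝕜 (indicatorConstLp 2 MeasurableSet.univ (measure_ne_top μ _) 1)

lemma integralL2_apply (f : Lp 𝕜 2 μ) : integralL2 μ f = ∫ x, f x ∂μ := by
  rw [integralL2, innerSL_apply_apply, L2.inner_indicatorConstLp_one, setIntegral_univ]

lemma integralL2_hilbertSchmidtOperator {k : Lp 𝕜 2 (μ.prod μ)}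
    (hk : ∀ᵐ y ∂μ, ∫ x, k (x, y) ∂μ = 1) (f : Lp 𝕜 2 μ) :
    integralL2 μ (hilbertSchmidtOperator k f) = integralL2 μ f := by
  rw [integralL2_apply, integralL2_apply, integral_congr_ae (coeFn_hilbertSchmidtOperator k f),
    integral_kernelIntegral (Lp.memLp k) (Lp.memLp f)]
  refine integral_congr_ae ?_
  filter_upwards [hk] with y hy
  rw [hy, one_mul]

lemma ae_integral_deriv_eq_zero [IsFiniteMeasure ν] {k : 𝕜 → Lp 𝕜 2 (μ.prod ν)}
    {k' : Lp 𝕜 2 (μ.prod ν)} {s : Set 𝕜} {t₀ : 𝕜} {m : β → 𝕜} (hs : UniqueDiffWithinAt 𝕜 s t₀)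
    (ht₀ : t₀ ∈ s) (hk : HasDerivWithinAt k k' s t₀)
    (hm : ∀ t ∈ s, ∀ᵐ y ∂ν, ∫ x, k t (x, y) ∂μ = m y) :
    ∀ᵐ y ∂ν, ∫ x, k' (x, y) ∂μ = 0 := by
  have hint : ∀ l : Lp 𝕜 2 (μ.prod ν), Integrable l (μ.prod ν) := fun l ↦
    (Lp.memLp l).integrable one_le_two
  refine (hint k').integral_prod_right.ae_eq_zero_of_forall_setIntegral_eq_zero fun B hB _ ↦ ?_
  let φ : Lp 𝕜 2 (μ.prod ν) →L[𝕜] 𝕜 := innerSL 𝕜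
    (indicatorConstLp 2 (MeasurableSet.univ.prod hB) (measure_ne_top (μ.prod ν) _) 1)
  have hφ : ∀ l, φ l = ∫ y in B, (∫ x, l (x, y) ∂μ) ∂ν := fun l ↦ by
    rw [innerSL_apply_apply, L2.inner_indicatorConstLp_one, ← Measure.prod_restrict,
      Measure.restrict_univ, integral_prod_symm]
    exact (hint l).mono_measure (Measure.prod_mono le_rfl Measure.restrict_le_self)
  have hconst : ∀ t ∈ s, φ (k t) = ∫ y in B, m y ∂ν := fun t ht ↦ by
    rw [hφ]
    exact integral_congr_ae (ae_restrict_of_ae (hm t ht))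
  rw [← hφ]
  exact hs.eq_deriv s (φ.hasFDerivAt.comp_hasDerivWithinAt t₀ hk)
    ((hasDerivWithinAt_const t₀ s _).congr hconst (hconst t₀ ht₀))

end LinearResponse

theorem linear_response_formula_kernel_operators_general
    {α : Type*} [MeasurableSpace α] {μ : Measure α} [IsFiniteMeasure μ]
    {δbar : ℝ} (hδbar : 0 < δbar) {k₀ kdot : Lp ℝ 2 (μ.prod μ)} {r : ℝ → Lp ℝ 2 (μ.prod μ)}
    (hr0 : r 0 = 0) (hr : Tendsto (fun δ ↦ δ⁻¹ * ‖r δ‖) (𝓝[>] 0) (𝓝 0))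
    (hmarginal : ∀ δ ∈ Set.Ico 0 δbar, ∀ᵐ y ∂μ, ∫ x, (k₀ + δ • kdot + r δ) (x, y) ∂μ = 1)
    {L : ℝ → Lp ℝ 2 μ →L[ℝ] Lp ℝ 2 μ}
    (hL : ∀ δ ∈ Set.Ico 0 δbar, ∀ f : Lp ℝ 2 μ,
      ∀ᵐ x ∂μ, L δ f x = ∫ y, (k₀ + δ • kdot + r δ) (x, y) * f y ∂μ)
    (hmix : ∀ g : Lp ℝ 2 μ, ∫ x, g x ∂μ = 0 →
      Tendsto (fun n : ℕ ↦ ‖(L 0 ^ n) g‖) atTop (𝓝 0))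
    {f₀ : Lp ℝ 2 μ} (hfix : L 0 f₀ = f₀) (hnorm : ∫ x, f₀ x ∂μ = 1) :
    (∀ᵐ y ∂μ, ∫ x, kdot (x, y) ∂μ = 0) ∧
    ∃ δ₂ : ℝ, 0 < δ₂ ∧ δ₂ ≤ δbar ∧
      (∀ δ ∈ Set.Ico 0 δ₂, ∃! f : Lp ℝ 2 μ, L δ f = f ∧ ∫ x, f x ∂μ = 1) ∧
      ∀ g : Lp ℝ 2 μ, (∀ᵐ x ∂μ, g x = ∫ y, kdot (x, y) * f₀ y ∂μ) →
        ∀ h : Lp ℝ 2 μ, ∫ x, h x ∂μ = 0 → h - L 0 h = g →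
        ∀ f : ℝ → Lp ℝ 2 μ, (∀ δ ∈ Set.Ico 0 δ₂, L δ (f δ) = f δ ∧ ∫ x, f δ x ∂μ = 1) →
          Tendsto (fun δ ↦ ‖δ⁻¹ • (f δ - f₀) - h‖) (𝓝[>] 0) (𝓝 0) := by
  have h0 : (0 : ℝ) ∈ Set.Ico 0 δbar := ⟨le_rfl, hδbar⟩
  have hk : HasDerivWithinAt (fun δ ↦ k₀ + δ • kdot + r δ) kdot (Set.Ico 0 δbar) 0 :=
    hasDerivWithinAt_add_smul_add hδbar hr0 hr
  have hL_eq : ∀ δ ∈ Set.Ico 0 δbar, L δ = hilbertSchmidtOperator (k₀ + δ • kdot + r δ) :=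
    fun δ hδ ↦ eq_hilbertSchmidtOperator (hL δ hδ)
  have hL_deriv : HasDerivWithinAt L (hilbertSchmidtOperator kdot) (Set.Ico 0 δbar) 0 :=
    (hilbertSchmidtOperator.hasFDerivAt.comp_hasDerivWithinAt 0 hk).congr hL_eq (hL_eq 0 h0)
  have hL_int : ∀ δ ∈ Set.Ico 0 δbar, ∀ f, integralL2 μ (L δ f) = integralL2 μ f :=
    fun δ hδ f ↦ by rw [hL_eq δ hδ, integralL2_hilbertSchmidtOperator (hmarginal δ hδ)]
  have hL_comp : IsCompactOperator (L 0) :=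
    hL_eq 0 h0 ▸ isCompactOperator_hilbertSchmidtOperator _
  simp only [← integralL2_apply, ← tendsto_zero_iff_norm_tendsto_zero] at hmix hnorm
  obtain ⟨δ₂, hδ₂, hunique, hresponse⟩ :=
    linear_response_of_isCompactOperator hδbar hL_comp hL_deriv hL_int hmix hfix hnorm
  simp only [integralL2_apply] at hunique hresponse
  refine ⟨ae_integral_deriv_eq_zero ?_ h0 hk hmarginal, δ₂, hδ₂.1, hδ₂.2, hunique, ?_⟩
  · exact (uniqueDiffOn_Ico 0 δbar) 0 h0
  · intro g hg h hh hresp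
    refine hresponse h hh (hresp.trans (Lp.ext ?_))
    exact EventuallyEq.trans hg (coeFn_hilbertSchmidtOperator kdot f₀).symm

instance : IsFiniteMeasure μ01 := by
  unfold μ01
  infer_instance

/-- Linear response formula for kernel (Hilbert–Schmidt) operators:
for stochastic kernels `k_δ = k₀ + δ·k̇ + r_δ` with `‖r_δ‖₂/δ → 0` whose operator at
`δ = 0` is mixing, the derivative kernel `k̇` lies in `V_ker`, the perturbed
operators have unique normalized fixed points `f_δ`, and `(f_δ − f₀)/δ → h` where
`h ∈ V` solves `h − L₀ h = ∫ k̇(·,y) f₀(y) dy`. -/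
theorem linear_response_formula_kernel_operators
    (δbar : ℝ) (hδbar : 0 < δbar)
    (k₀ kdot : Lp ℝ 2 ν01) (r : ℝ → Lp ℝ 2 ν01)
    (hr0 : r 0 = 0)
    (hr : Filter.Tendsto (fun δ : ℝ => δ⁻¹ * ‖r δ‖)
      (nhdsWithin 0 (Set.Ioi 0)) (nhds 0))
    (hstoch_nonneg : ∀ δ ∈ Set.Ico (0 : ℝ) δbar,
      ∀ᵐ p ∂ν01, 0 ≤ (k₀ + δ • kdot + r δ) p)
    (hstoch_int : ∀ δ ∈ Set.Ico (0 : ℝ) δbar,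
      ∀ᵐ y ∂μ01, ∫ x, (k₀ + δ • kdot + r δ) (x, y) ∂μ01 = 1)
    (Lop : ℝ → (Lp ℝ 2 μ01 →L[ℝ] Lp ℝ 2 μ01))
    (hLop : ∀ δ ∈ Set.Ico (0 : ℝ) δbar, ∀ f : Lp ℝ 2 μ01,
      ∀ᵐ x ∂μ01, (Lop δ f) x = ∫ y, (k₀ + δ • kdot + r δ) (x, y) * f y ∂μ01)
    (hmix : ∀ g : Lp ℝ 2 μ01, (∫ x, g x ∂μ01) = 0 →
      Filter.Tendsto (fun n : ℕ => ‖((Lop 0) ^ n) g‖) Filter.atTop (nhds 0))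
    (f₀ : Lp ℝ 2 μ01) (hf₀fix : Lop 0 f₀ = f₀) (hf₀int : ∫ x, f₀ x ∂μ01 = 1) :
    (∀ᵐ y ∂μ01, ∫ x, kdot (x, y) ∂μ01 = 0) ∧
    (∃ δ₂ : ℝ, 0 < δ₂ ∧ δ₂ ≤ δbar ∧
      (∀ δ ∈ Set.Ico (0 : ℝ) δ₂,
        ∃! fδ : Lp ℝ 2 μ01, Lop δ fδ = fδ ∧ ∫ x, fδ x ∂μ01 = 1) ∧
      (∀ g : Lp ℝ 2 μ01,
        (∀ᵐ x ∂μ01, g x = ∫ y, kdot (x, y) * f₀ y ∂μ01) →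
        ∀ h : Lp ℝ 2 μ01, (∫ x, h x ∂μ01) = 0 → h - Lop 0 h = g →
        ∀ fam : ℝ → Lp ℝ 2 μ01,
          (∀ δ ∈ Set.Ico (0 : ℝ) δ₂, Lop δ (fam δ) = fam δ ∧ ∫ x, (fam δ) x ∂μ01 = 1) →
          Filter.Tendsto (fun δ : ℝ => ‖δ⁻¹ • (fam δ - f₀) - h‖)
            (nhdsWithin 0 (Set.Ioi 0)) (nhds 0))) := by
  exact linear_response_formula_kernel_operators_general hδbar hr0 hr hstoch_int hLop hmix hf₀fix
    hf₀int
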